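/- Let k be a commutative ring and B an associative unital k-algebra which is finitely generated and projective as a k-module. Then the following two conditions are equivalent: (i) for every associative unital k-algebra A and every (B ⊗_k A)-module M, the module M is finitely generated projective over B ⊗_k A if and only if M is finitely generated projective as an A-module (via restriction of scalars along the algebra map A → B ⊗_k A, a ↦ 1 ⊗ a); (ii) B is projective as a module over its enveloping algebra B ⊗_k B^op (where B acts on itself by left and right multiplication). -/

import Mathlib

/-!
The algebra `B` is projective over `B ⊗ Bᵐᵒᵖ` exactly when it is separable, that is, when the
multiplication map `B ⊗ Bᵐᵒᵖ → B` has a `B ⊗ Bᵐᵒᵖ`-linear section.  The image of `1` under such a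
section is a *separability element* `e = ∑ bᵢ ⊗ bᵢ'`: it satisfies `∑ bᵢ bᵢ' = 1` and
`(b ⊗ 1) e = (1 ⊗ b) e` for all `b`.

(i) ⇒ (ii): take `A = Bᵐᵒᵖ` and `M = B`.  As a right `B`-module, `B` is free of rank one.

(ii) ⇒ (i): if `M` is finitely generated projective over `B ⊗ A`, it is so over `A` because
`B ⊗ A` is finitely generated projective over `A`, by base change from `k`
(`projective_trans`).  Conversely, let `M` be finitely generated projective over `A`.  It is
clearly finitely generated over `B ⊗ A`.  Let `π : F → M` be the canonical surjection from a free
`B ⊗ A`-module.  It has an `A`-linear section `f`, and the average `m ↦ ∑ bᵢ f (bᵢ' m)` is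
a `B ⊗ A`-linear section (`projective_of_separability`), so that `M` is a direct summand of `F`.
-/

open TensorProduct

/-- Transitivity of projectivity along a ring extension, for noncommutative rings. -/
lemma projective_trans (A R M : Type*) [Ring A] [Ring R] [Module A R] [IsScalarTower A R R]
    [AddCommGroup M] [Module R M] [Module A M] [IsScalarTower A R M]
    [Module.Projective A R] [Module.Projective R M] : Module.Projective A M := by
  classical
  obtain ⟨s, hs⟩ := (Module.projective_def' (R := R) (P := M)).1 inferInstance
  have : Module.Projective A (M →₀ R) :=
    Module.Projective.of_equiv' (finsuppLequivDFinsupp (ι := M) (M := R) A).symm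
  refine Module.Projective.of_split (s.restrictScalars A)
    ((Finsupp.linearCombination R id).restrictScalars A) ?_
  ext m
  exact LinearMap.congr_fun hs m

section Averaging

variable {k B A M P : Type*} [CommRing k] [Ring B] [Algebra k B] [Ring A] [Algebra k A]
  [AddCommGroup M] [Module (B ⊗[k] A) M] [AddCommGroup P] [Module (B ⊗[k] A) P]

/-- For an additive map `f : M → P` of `B ⊗ A`-modules commuting with the action of `A` and for
`m : M`, the additive map `B ⊗ Bᵐᵒᵖ → P` sending `b ⊗ b'` to `b • f (b' • m)`. -/
noncomputable def average (f : M →+ P)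
    (hf : ∀ (a : A) m, f (((1 : B) ⊗ₜ[k] a) • m) = ((1 : B) ⊗ₜ[k] a) • f m) (m : M) :
    B ⊗[k] Bᵐᵒᵖ →+ P :=
  TensorProduct.liftAddHom
    (AddMonoidHom.mk'
      (fun b => AddMonoidHom.mk'
        (fun b' => (b ⊗ₜ[k] (1 : A)) • f ((b'.unop ⊗ₜ[k] (1 : A)) • m))
        (fun x y => by simp [TensorProduct.add_tmul, add_smul]))
      (fun x y => by ext; simp [TensorProduct.add_tmul, add_smul]))
    (fun r b c => by
      -- both sides equal `b • (1 ⊗ r) • f (c • m)`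
      have h1 : (r • b) ⊗ₜ[k] (1 : A) = (b ⊗ₜ[k] (1 : A)) * ((1 : B) ⊗ₜ[k] (r • (1 : A))) := by
        simp [TensorProduct.smul_tmul]
      have h2 : (r • c.unop) ⊗ₜ[k] (1 : A)
          = ((1 : B) ⊗ₜ[k] (r • (1 : A))) * (c.unop ⊗ₜ[k] (1 : A)) := by
        simp [TensorProduct.smul_tmul]
      change ((r • b) ⊗ₜ[k] (1 : A)) • f _ = (b ⊗ₜ[k] (1 : A)) • f (((r • c).unop ⊗ₜ[k] (1 : A)) • m)
      rw [MulOpposite.unop_smul, h1, h2, mul_smul, mul_smul, hf])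

variable (f : M →+ P)
    (hf : ∀ (a : A) m, f (((1 : B) ⊗ₜ[k] a) • m) = ((1 : B) ⊗ₜ[k] a) • f m)

lemma average_tmul (m : M) (b : B) (b' : Bᵐᵒᵖ) :
    average f hf m (b ⊗ₜ b') = (b ⊗ₜ[k] (1 : A)) • f ((b'.unop ⊗ₜ[k] (1 : A)) • m) := rfl

lemma average_add (m n : M) (t : B ⊗[k] Bᵐᵒᵖ) :
    average f hf (m + n) t = average f hf m t + average f hf n t := by
  induction t with
  | zero => simp
  | tmul b b' => simp [average_tmul]
  | add x y hx hy => rw [map_add, map_add, map_add, hx, hy]; abel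

lemma average_smul_right (a : A) (m : M) (t : B ⊗[k] Bᵐᵒᵖ) :
    average f hf (((1 : B) ⊗ₜ[k] a) • m) t = ((1 : B) ⊗ₜ[k] a) • average f hf m t := by
  induction t with
  | zero => simp
  | tmul b b' =>
    have h (c : B) : (c ⊗ₜ[k] (1 : A)) * ((1 : B) ⊗ₜ[k] a)
        = ((1 : B) ⊗ₜ[k] a) * (c ⊗ₜ[k] (1 : A)) := by simp
    rw [average_tmul, average_tmul, ← mul_smul, h, mul_smul, hf, ← mul_smul, h, mul_smul]
  | add x y hx hy => rw [map_add, map_add, hx, hy, smul_add]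

lemma average_left_mul (b : B) (m : M) (t : B ⊗[k] Bᵐᵒᵖ) :
    average f hf m ((b ⊗ₜ 1) * t) = (b ⊗ₜ[k] (1 : A)) • average f hf m t := by
  induction t with
  | zero => simp
  | tmul c c' => simp [average_tmul, ← mul_smul]
  | add x y hx hy => rw [mul_add, map_add, map_add, hx, hy, smul_add]

lemma average_right_mul (b : B) (m : M) (t : B ⊗[k] Bᵐᵒᵖ) :
    average f hf m ((1 ⊗ₜ MulOpposite.op b) * t) = average f hf ((b ⊗ₜ[k] (1 : A)) • m) t := by
  induction t with
  | zero => simp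
  | tmul c c' => simp [average_tmul, ← mul_smul]
  | add x y hx hy => rw [mul_add, map_add, map_add, hx, hy]

attribute [local instance] TensorProduct.Algebra.module in
lemma map_average_of_section (π : P →ₗ[B ⊗[k] A] M) (hπ : ∀ m, π (f m) = m) (m : M)
    (t : B ⊗[k] Bᵐᵒᵖ) : π (average f hf m t) = ((t • (1 : B)) ⊗ₜ[k] (1 : A)) • m := by
  induction t with
  | zero =>
    have h : (0 : B ⊗[k] Bᵐᵒᵖ) • (1 : B) = 0 := zero_smul (B ⊗[k] Bᵐᵒᵖ) (1 : B)
    rw [map_zero, map_zero, h, TensorProduct.zero_tmul, zero_smul]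
  | tmul b b' =>
    simp [average_tmul, hπ, ← mul_smul, TensorProduct.Algebra.smul_def]
  | add x y hx hy => rw [map_add, map_add, hx, hy, add_smul, TensorProduct.add_tmul, add_smul]

end Averaging

attribute [local instance] TensorProduct.Algebra.module in
/-- A separability element `e` of `B` turns an `A`-linear splitting of a free presentation
into a `B ⊗ A`-linear one, by averaging. -/
lemma projective_of_separability {k B A M : Type*} [CommRing k] [Ring B] [Algebra k B]
    [Ring A] [Algebra k A] [AddCommGroup M] [Module (B ⊗[k] A) M] [Module A M]
    [Module A (B ⊗[k] A)] [IsScalarTower A (B ⊗[k] A) (B ⊗[k] A)] [IsScalarTower A (B ⊗[k] A) M]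
    (hA : ∀ a : A, a • (1 : B ⊗[k] A) = 1 ⊗ₜ a) [Module.Projective A M]
    (e : B ⊗[k] Bᵐᵒᵖ) (he : e • (1 : B) = 1)
    (hc : ∀ b : B, (b ⊗ₜ 1) * e = (1 ⊗ₜ MulOpposite.op b) * e) :
    Module.Projective (B ⊗[k] A) M := by
  let π : (M →₀ B ⊗[k] A) →ₗ[B ⊗[k] A] M := Finsupp.linearCombination (B ⊗[k] A) id
  have hπ : Function.Surjective π := fun m => ⟨Finsupp.single m 1, by simp [π]⟩
  obtain ⟨f, hf⟩ := Module.projective_lifting_property (R := A) (π.restrictScalars A)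
    LinearMap.id hπ
  have hs (a : A) (m : M) : f.toAddMonoidHom (((1 : B) ⊗ₜ[k] a) • m)
      = ((1 : B) ⊗ₜ[k] a) • f.toAddMonoidHom m := by
    rw [← hA, smul_one_smul, smul_one_smul]
    exact f.map_smul a m
  let g : M →ₗ[B ⊗[k] A] (M →₀ B ⊗[k] A) :=
    { toFun m := average f.toAddMonoidHom hs m e
      map_add' m n := average_add _ hs m n e
      map_smul' r m := by
        induction r generalizing m with
        | zero =>
          -- additivity of the average gives its vanishing at `0`
          simpa using average_add f.toAddMonoidHom hs 0 0 e
        | tmul b a =>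
          have h : b ⊗ₜ[k] a = (b ⊗ₜ[k] (1 : A)) * ((1 : B) ⊗ₜ[k] a) := by simp
          rw [RingHom.id_apply, h, mul_smul, mul_smul, ← average_right_mul, ← hc,
            average_left_mul, average_smul_right]
        | add x y hx hy =>
          rw [add_smul, average_add, hx, hy]
          simp [add_smul] }
  refine Module.Projective.of_split g π ?_
  ext m
  have := map_average_of_section f.toAddMonoidHom hs π (fun m => LinearMap.congr_fun hf m) m e
  rw [he, ← Algebra.TensorProduct.one_def, one_smul] at this
  exact this

attribute [local instance] TensorProduct.Algebra.module in
/-- If `B` is projective over `B ⊗ Bᵐᵒᵖ`, then the multiplication map `t ↦ t • 1` splits, and the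
image of `1` under a splitting is a separability element. -/
lemma exists_separability_element (k B : Type*) [CommRing k] [Ring B] [Algebra k B]
    [Module.Projective (B ⊗[k] Bᵐᵒᵖ) B] :
    ∃ e : B ⊗[k] Bᵐᵒᵖ, e • (1 : B) = 1 ∧
      ∀ b : B, (b ⊗ₜ 1) * e = (1 ⊗ₜ MulOpposite.op b) * e := by
  obtain ⟨s, hs⟩ := Module.projective_lifting_property
    (LinearMap.toSpanSingleton (B ⊗[k] Bᵐᵒᵖ) B 1) LinearMap.id
    (fun b => ⟨b ⊗ₜ 1, by simp [TensorProduct.Algebra.smul_def]⟩)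
  refine ⟨s 1, LinearMap.congr_fun hs 1, fun b => ?_⟩
  rw [← smul_eq_mul, ← smul_eq_mul, ← map_smul, ← map_smul]
  simp [TensorProduct.Algebra.smul_def]

/-- Let `k` be a commutative ring and `B` an associative unital `k`-algebra
which is finitely generated projective as a `k`-module.  Then the following are equivalent:
(i) for every associative unital `k`-algebra `A` and every `(B ⊗[k] A)`-module `M`, the module
`M` is finitely generated projective over `B ⊗[k] A` if and only if it is finitely generated
projective as an `A`-module via restriction of scalars along `a ↦ 1 ⊗ a`;
(ii) `B` is projective as a module over its enveloping algebra `B ⊗[k] Bᵐᵒᵖ`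
(acting by left and right multiplication). -/
theorem saturated_iff_projective_over_enveloping
    (k : Type u) (B : Type u) [CommRing k] [Ring B] [Algebra k B]
    [Module.Finite k B] [Module.Projective k B] :
    (∀ (A : Type u) [Ring A] [Algebra k A] (M : Type u) [AddCommGroup M]
        [Module (B ⊗[k] A) M],
        letI : Module A M :=
          Module.compHom M (Algebra.TensorProduct.includeRight : A →ₐ[k] B ⊗[k] A).toRingHom
        ((Module.Finite (B ⊗[k] A) M ∧ Module.Projective (B ⊗[k] A) M) ↔
          (Module.Finite A M ∧ Module.Projective A M))) ↔
      (letI : Module (B ⊗[k] Bᵐᵒᵖ) B := TensorProduct.Algebra.module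
       Module.Projective (B ⊗[k] Bᵐᵒᵖ) B) := by
  constructor
  · intro h
    let : Module (B ⊗[k] Bᵐᵒᵖ) B := TensorProduct.Algebra.module
    -- the action of `Bᵐᵒᵖ` on `B` obtained by restriction along `Bᵐᵒᵖ → B ⊗ Bᵐᵒᵖ` is
    -- right multiplication, so `MulOpposite.op` identifies `B` with the free module `Bᵐᵒᵖ`
    refine ((h Bᵐᵒᵖ B).2 ?_).2
    let inst : Module Bᵐᵒᵖ B := Module.compHom B
      (Algebra.TensorProduct.includeRight : Bᵐᵒᵖ →ₐ[k] B ⊗[k] Bᵐᵒᵖ).toRingHom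
    let ε : @LinearEquiv Bᵐᵒᵖ Bᵐᵒᵖ _ _ (RingHom.id _) (RingHom.id _) _ _ Bᵐᵒᵖ B _ _ _ inst :=
      { MulOpposite.opAddEquiv.symm with
        map_smul' := fun c x => by
          change (c * x).unop = (1 : B) • (x.unop * c.unop)
          simp }
    exact ⟨Module.Finite.equiv ε, Module.Projective.of_equiv' ε⟩
  · intro h A _ _ M _ _
    let : Module A M :=
      Module.compHom M (Algebra.TensorProduct.includeRight : A →ₐ[k] B ⊗[k] A).toRingHom
    let : Module A (B ⊗[k] A) := Module.compHom _
      (Algebra.TensorProduct.includeRight : A →ₐ[k] B ⊗[k] A).toRingHom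
    have hA (a : A) (x : B ⊗[k] A) : a • x = (1 ⊗ₜ a) * x := rfl
    have hM (a : A) (m : M) : a • m = ((1 : B) ⊗ₜ[k] a) • m := rfl
    have : IsScalarTower A (B ⊗[k] A) (B ⊗[k] A) :=
      ⟨fun a x y => by rw [hA, hA, smul_eq_mul, smul_eq_mul, mul_assoc]⟩
    have : IsScalarTower A (B ⊗[k] A) M := ⟨fun a x m => by rw [hA, hM, mul_smul]⟩
    constructor
    · rintro ⟨_, _⟩
      -- `B ⊗ A` is, up to swapping the factors, the base change of `B` to `A`
      let ε : (A ⊗[k] B) ≃ₗ[A] (B ⊗[k] A) :=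
        { (TensorProduct.comm k A B).toAddEquiv with
          map_smul' := fun a x => by
            change TensorProduct.comm k A B (a • x) = (1 ⊗ₜ a) * TensorProduct.comm k A B x
            induction x with
            | zero => simp
            | tmul c b => simp [TensorProduct.smul_tmul']
            | add x y hx hy => rw [smul_add, map_add, map_add, hx, hy, mul_add] }
      have : Module.Finite A (B ⊗[k] A) := Module.Finite.equiv ε
      have : Module.Projective A (B ⊗[k] A) := Module.Projective.of_equiv' ε
      exact ⟨Module.Finite.trans (B ⊗[k] A) M, projective_trans A (B ⊗[k] A) M⟩
    · rintro ⟨_, _⟩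
      let : Module (B ⊗[k] Bᵐᵒᵖ) B := TensorProduct.Algebra.module
      have : Module.Projective (B ⊗[k] Bᵐᵒᵖ) B := h
      obtain ⟨e, he, hc⟩ := exists_separability_element k B
      exact ⟨Module.Finite.of_restrictScalars_finite A (B ⊗[k] A) M,
        projective_of_separability (fun a => by rw [hA, mul_one]) e he hc⟩
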